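/- arXiv:2310.00414 — 2 statements merged into one kernel-verified Lean document; each statement's English description precedes it below -/
import Mathlib

section
/- Let Γ be a reduced, non-ascending labeled graph with all labels positive, and let e, f be mobile edges of Γ with f ∉ {e, ē}. Suppose e can slide over f in Γ, yielding a reduced labeled graph Γ′, and in Γ′ the edge f̄ can then slide over e, yielding Γ″. Then λ(e) = λ(f) in Γ, and Γ″ is isomorphic as a labeled graph to the labeled graph obtained from Γ by the single slide of f over e. -/
/-! Labeled graphs in the sense of generalized Baumslag–Solitar theory. -/

structure LGraph (V E : Type) where
  o : E → V
  bar : E → E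
  bar_bar : ∀ e, bar (bar e) = e
  bar_ne : ∀ e, bar e ≠ e
  lab : E → ℤ

namespace LGraph

variable {V E V' E' : Type}

/-- Terminal vertex of an oriented edge. -/
def t (G : LGraph V E) (e : E) : V := G.o (G.bar e)

/-- All labels are positive. -/
def Positive (G : LGraph V E) : Prop := ∀ e : E, 0 < G.lab e

/-- No collapsible edge: every label-1 edge is a loop. -/
def Reduced (G : LGraph V E) : Prop := ∀ e : E, G.lab e = 1 → G.o e = G.t e

/-- An `n`-rose: one vertex and `n` pairs of oriented edges. -/
def IsRose (G : LGraph V E) (n : ℕ) : Prop :=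
  Nat.card V = 1 ∧ Nat.card E = 2 * n

/-- Modulus of a single oriented edge: `λ(ē)/λ(e)`. -/
def qe (G : LGraph V E) (e : E) : ℚ := (G.lab (G.bar e) : ℚ) / (G.lab e : ℚ)

/-- Modulus of an edge path. -/
def q (G : LGraph V E) (l : List E) : ℚ := (l.map G.qe).prod

/-- Consecutive edges match up. -/
def IsEdgePath (G : LGraph V E) (l : List E) : Prop :=
  List.Chain' (fun a b => G.t a = G.o b) l

/-- An `e`-edge path. -/
def IsEEdgePath (G : LGraph V E) (e : E) (l : List E) : Prop :=
  G.IsEdgePath l ∧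
  (∀ a ∈ l, a ≠ e ∧ a ≠ G.bar e) ∧
  (∀ a ∈ l.head?, G.o a = G.o e) ∧
  ∀ i : Fin l.length, ∃ k : ℤ,
    (G.lab e : ℚ) * G.q (l.take i.1) = (k : ℚ) * (G.lab (l.get i) : ℚ)

/-- A monotone cycle `(e₁,…,eₛ,e)`. -/
def IsMonotoneCycle (G : LGraph V E) (l : List E) (e : E) : Prop :=
  G.IsEEdgePath (G.bar e) l ∧
  G.t (l.getLastD e) = G.o e ∧
  ∃ k : ℤ, G.q (l ++ [e]) = (k : ℚ)

/-- A strict monotone cycle. -/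
def IsStrictMonotoneCycle (G : LGraph V E) (l : List E) (e : E) : Prop :=
  G.IsMonotoneCycle l e ∧ G.q (l ++ [e]) ≠ 1

def HasStrictMonotoneCycle (G : LGraph V E) : Prop :=
  ∃ (l : List E) (e : E), G.IsStrictMonotoneCycle l e

/-- A strict `e`-integer cycle. -/
def IsStrictIntegerCycle (G : LGraph V E) (e : E) (l : List E) : Prop :=
  G.IsEEdgePath e l ∧ l ≠ [] ∧
  G.t (l.getLastD e) = G.o (l.headD e) ∧
  (∃ k : ℤ, G.q l = (k : ℚ)) ∧ G.q l ≠ 1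

/-- A mobile edge. -/
def Mobile (G : LGraph V E) (e : E) : Prop :=
  (∃ l, G.IsStrictMonotoneCycle l e ∨ G.IsStrictMonotoneCycle l (G.bar e)) ∨
  (∃ l, G.IsStrictIntegerCycle e l ∨ G.IsStrictIntegerCycle (G.bar e) l)

/-- The single slide of `e` over `f` is permitted. -/
def CanSlide (G : LGraph V E) (e f : E) : Prop :=
  f ≠ e ∧ f ≠ G.bar e ∧ G.o f = G.o e ∧ G.lab f ∣ G.lab e

open Classical in
/-- The result of the single slide of `e` over `f`. -/
noncomputable def slide (G : LGraph V E) (e f : E) : LGraph V E where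
  o := fun x => if x = e then G.t f else G.o x
  bar := G.bar
  bar_bar := G.bar_bar
  bar_ne := G.bar_ne
  lab := fun x => if x = e then G.lab e * G.lab (G.bar f) / G.lab f else G.lab x

/-- Successively slide `e` over the edges of a path. -/
noncomputable def slidePath : LGraph V E → E → List E → LGraph V E
  | G, _, [] => G
  | G, e, f :: l => slidePath (G.slide e f) e l

/-- Each single slide in the successive slide of `e` over a path is permitted. -/
def CanSlidePath : LGraph V E → E → List E → Prop
  | _, _, [] => True
  | G, e, f :: l => G.CanSlide e f ∧ CanSlidePath (G.slide e f) e l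

/-- Each single slide is permitted and each intermediate graph is reduced. -/
def GoodSlidePath : LGraph V E → E → List E → Prop
  | _, _, [] => True
  | G, e, f :: l => G.CanSlide e f ∧ (G.slide e f).Reduced ∧ GoodSlidePath (G.slide e f) e l

/-- Perform a finite sequence of single slides, given as pairs (slid edge, edge slid over). -/
noncomputable def slideSeq : LGraph V E → List (E × E) → LGraph V E
  | G, [] => G
  | G, p :: rest => slideSeq (G.slide p.1 p.2) rest

/-- A sequence of permitted single slides, each sliding a mobile edge. -/
def MobileSlideSeq : LGraph V E → List (E × E) → Prop
  | _, [] => True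
  | G, p :: rest => G.Mobile p.1 ∧ G.CanSlide p.1 p.2 ∧ MobileSlideSeq (G.slide p.1 p.2) rest

/-- Isomorphism of labeled graphs. -/
def Isom (G : LGraph V E) (G' : LGraph V' E') : Prop :=
  ∃ (φ : V → V') (Φ : E → E'),
    Function.Bijective φ ∧ Function.Bijective Φ ∧
    (∀ x, G'.o (Φ x) = φ (G.o x)) ∧
    (∀ x, G'.bar (Φ x) = Φ (G.bar x)) ∧
    (∀ x, G'.lab (Φ x) = G.lab x)

open Classical in
/-- The result of the induction move at the loop `e` with multiplier `m`. -/
noncomputable def inductionMove (G : LGraph V E) (e : E) (m : ℤ) : LGraph V E where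
  o := G.o
  bar := G.bar
  bar_bar := G.bar_bar
  bar_ne := G.bar_ne
  lab := fun x => if x ≠ e ∧ x ≠ G.bar e ∧ G.o x = G.o e then m * G.lab x else G.lab x

/-- `G'` is obtained from `G` by a single slide move (up to isomorphism). -/
def IsSlideMove (G : LGraph V E) (G' : LGraph V' E') : Prop :=
  ∃ e f, G.CanSlide e f ∧ Isom G' (G.slide e f)

/-- `G'` is obtained from `G` by a (forward) induction move. -/
def IsInductionMove (G : LGraph V E) (G' : LGraph V' E') : Prop :=
  ∃ (e : E) (m : ℤ), G.o e = G.t e ∧ G.lab e = 1 ∧ 1 ≤ m ∧ m ∣ G.lab (G.bar e) ∧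
    Isom G' (G.inductionMove e m)

/-- `G'` is obtained from `G` by an A-move. -/
def IsAMove (G : LGraph V E) (G' : LGraph V' E') : Prop :=
  ∃ (e d : E) (e' : E') (φ : V → V') (Φ : E → E'),
    G.o e = G.t e ∧ G.lab e = 1 ∧ G.lab (G.bar e) ≠ 1 ∧
    G.o d = G.o e ∧ G.t d ≠ G.o e ∧
    G.lab d ≠ 1 ∧ G.lab (G.bar d) ≠ 1 ∧ G.lab d ∣ G.lab (G.bar e) ∧
    (∀ x : E, G.o x = G.o e → x = e ∨ x = G.bar e ∨ x = d) ∧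
    G'.o e' = φ (G.t d) ∧ G'.t e' = φ (G.t d) ∧
    G'.lab e' = G.lab (G.bar d) ∧
    G'.lab (G'.bar e') = G.lab (G.bar d) * G.lab (G.bar e) ∧
    (∀ w₁ w₂ : V, w₁ ≠ G.o e → w₂ ≠ G.o e → φ w₁ = φ w₂ → w₁ = w₂) ∧
    (∀ v' : V', ∃ w : V, w ≠ G.o e ∧ φ w = v') ∧
    (∀ x : E, x ≠ e → x ≠ G.bar e → x ≠ d → x ≠ G.bar d →
      Φ x ≠ e' ∧ Φ x ≠ G'.bar e' ∧
      G'.o (Φ x) = φ (G.o x) ∧ G'.bar (Φ x) = Φ (G.bar x) ∧ G'.lab (Φ x) = G.lab x) ∧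
    (∀ x y : E, x ≠ e → x ≠ G.bar e → x ≠ d → x ≠ G.bar d →
      y ≠ e → y ≠ G.bar e → y ≠ d → y ≠ G.bar d → Φ x = Φ y → x = y) ∧
    (∀ y : E', y ≠ e' → y ≠ G'.bar e' →
      ∃ x : E, x ≠ e ∧ x ≠ G.bar e ∧ x ≠ d ∧ x ≠ G.bar d ∧ Φ x = y)

/-- A strict ascending loop: a loop with `λ(e) = 1 ≠ λ(ē)`. -/
def HasStrictAscendingLoop (G : LGraph V E) : Prop :=
  ∃ e : E, G.o e = G.t e ∧ G.lab e = 1 ∧ G.lab (G.bar e) ≠ 1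

end LGraph

/-- A labeled graph with its vertex and edge types bundled. -/
structure BGraph where
  V : Type
  E : Type
  G : LGraph V E

/-- An elementary deformation move: a slide, an induction move or its inverse,
or an A-move or its inverse. -/
def BGraph.ElemMove (X Y : BGraph) : Prop :=
  LGraph.IsSlideMove X.G Y.G ∨ LGraph.IsInductionMove X.G Y.G ∨
  LGraph.IsInductionMove Y.G X.G ∨ LGraph.IsAMove X.G Y.G ∨ LGraph.IsAMove Y.G X.G

/-- A finite sequence of elementary moves with all intermediate graphs reduced. -/
def BGraph.MoveSeq : BGraph → BGraph → Prop :=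
  Relation.ReflTransGen (fun X Y => X.ElemMove Y ∧ Y.G.Reduced)

/-- A reduced labeled graph is non-ascending if no reduced labeled graph obtained from it
by slide, induction and A-moves (all intermediate graphs reduced) contains a
strict ascending loop. -/
def LGraph.NonAscending {V E : Type} (G : LGraph V E) : Prop :=
  ∀ Y : BGraph, BGraph.MoveSeq ⟨V, E, G⟩ Y → ¬ Y.G.HasStrictAscendingLoop

/-!
If `e` can slide over `f` and then `f̄` over `e`, then `λ(f)` divides `λ(e)` and the new label
`λ(e) λ(f̄) / λ(f)` of `e` divides `λ(f̄)`, so `λ(e)` divides `λ(f)` as well and positivity forces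
`λ(e) = λ(f)`. An edge sliding over one with the same label just takes over the origin and label
of the reversed edge. So after the two slides `e, f̄, ē, f` carry the origins and labels that
`f̄, ē, ē, f` had in `Γ`, whereas after sliding `f` over `e` it is `f̄, ē, f, e` that carry those
of `f̄, ē, ē, e`. Since `e` and `f` have the same origin and label in `Γ`, the rotation
`e ↦ f̄ ↦ ē ↦ f ↦ e` is an isomorphism.
-/

theorem eq_of_dvd_of_mul_ediv_dvd {a b c : ℤ} (ha : 0 ≤ a) (hb : 0 < b) (hc : c ≠ 0)
    (hba : b ∣ a) (h : a * c / b ∣ c) : a = b := by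
  have hmul : a * c ∣ b * c :=
    (Int.ediv_dvd_iff_dvd_mul (hba.mul_right c) hb.ne').1 h
  exact Int.dvd_antisymm ha hb.le ((mul_dvd_mul_iff_right hc).1 hmul) hba

namespace LGraph

variable {V E : Type} (G : LGraph V E) {e f : E}

theorem lab_eq_of_canSlide_of_canSlide_bar (he : 0 ≤ G.lab e) (hf : 0 < G.lab f)
    (hf' : G.lab (G.bar f) ≠ 0) (h₁ : G.CanSlide e f)
    (h₂ : (G.slide e f).CanSlide (G.bar f) e) : G.lab e = G.lab f := by
  obtain ⟨-, -, -, hdvd⟩ := h₁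
  obtain ⟨hne, -, -, hdvd'⟩ := h₂
  simp only [slide, if_true, if_neg hne.symm] at hdvd'
  exact eq_of_dvd_of_mul_ediv_dvd he hf hf' hdvd hdvd'

open Classical in
/-- The labeled graph in which the initial end of `e` is moved to that of `x`: the origin and label
of `e` become those of `x`. It describes a slide of `e` over an edge with the same label, with `x`
the reverse of that edge. -/
noncomputable def reattach (e x : E) : LGraph V E where
  o := Function.update G.o e (G.o x)
  bar := G.bar
  bar_bar := G.bar_bar
  bar_ne := G.bar_ne
  lab := Function.update G.lab e (G.lab x)

open Classical in
theorem reattach_o (e x : E) : (G.reattach e x).o = Function.update G.o e (G.o x) :=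
  rfl

open Classical in
theorem reattach_lab (e x : E) : (G.reattach e x).lab = Function.update G.lab e (G.lab x) :=
  rfl

theorem slide_eq_reattach (hlab : G.lab e = G.lab f) (hf : G.lab f ≠ 0) :
    G.slide e f = G.reattach e (G.bar f) := by
  have hquot : G.lab e * G.lab (G.bar f) / G.lab f = G.lab (G.bar f) := by
    rw [hlab, Int.mul_ediv_cancel_left _ hf]
  simp only [slide, reattach, t, hquot, mk.injEq, true_and]
  constructor <;> funext x <;> simp only [Function.update_apply]

theorem slide_slide_bar_eq_reattach_reattach (hlab : G.lab e = G.lab f) (hf : G.lab f ≠ 0)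
    (hf' : G.lab (G.bar f) ≠ 0) (hne' : f ≠ G.bar e) :
    (G.slide e f).slide (G.bar f) e =
      (G.reattach e (G.bar f)).reattach (G.bar f) (G.bar e) := by
  classical
  have hbar : G.bar f ≠ e := fun h ↦ hne' (by rw [← h, G.bar_bar])
  rw [G.slide_eq_reattach hlab hf]
  apply slide_eq_reattach
  · rw [reattach_lab, Function.update_of_ne hbar, Function.update_self]
  · rwa [reattach_lab, Function.update_self]

/-- The edges `e, f` with their reverses, in the cyclic order in which `edgeRotation` permutes
them. -/
def edgeCycle (e f : E) : List E :=
  [e, G.bar f, G.bar e, f]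

theorem mem_edgeCycle_iff {x : E} :
    x ∈ G.edgeCycle e f ↔ x = e ∨ x = G.bar f ∨ x = G.bar e ∨ x = f := by
  simp only [edgeCycle, List.mem_cons, List.not_mem_nil, or_false]

theorem bar_mem_edgeCycle_iff {x : E} : G.bar x ∈ G.edgeCycle e f ↔ x ∈ G.edgeCycle e f := by
  have := G.bar_bar
  grind [mem_edgeCycle_iff]

theorem nodup_edgeCycle (hne : f ≠ e) (hne' : f ≠ G.bar e) : (G.edgeCycle e f).Nodup := by
  have := G.bar_ne
  have := G.bar_bar
  grind [edgeCycle]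

open Classical in
/-- The permutation `e ↦ f̄ ↦ ē ↦ f ↦ e` of the oriented edges, the edge part of the isomorphism
`isom_reattach_reattach`. For `f ∈ {e, ē}` the list `edgeCycle` has repetitions and the value is
junk. -/
noncomputable def edgeRotation (e f : E) : Equiv.Perm E :=
  (G.edgeCycle e f).formPerm

theorem edgeRotation_left (hne : f ≠ e) (hne' : f ≠ G.bar e) :
    G.edgeRotation e f e = G.bar f := by
  classical
  exact List.formPerm_apply_getElem _ (G.nodup_edgeCycle hne hne') 0 (by simp [edgeCycle])

theorem edgeRotation_bar_right (hne : f ≠ e) (hne' : f ≠ G.bar e) :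
    G.edgeRotation e f (G.bar f) = G.bar e := by
  classical
  exact List.formPerm_apply_getElem _ (G.nodup_edgeCycle hne hne') 1 (by simp [edgeCycle])

theorem edgeRotation_bar_left (hne : f ≠ e) (hne' : f ≠ G.bar e) :
    G.edgeRotation e f (G.bar e) = f := by
  classical
  exact List.formPerm_apply_getElem _ (G.nodup_edgeCycle hne hne') 2 (by simp [edgeCycle])

theorem edgeRotation_right : G.edgeRotation e f f = e := by
  classical
  exact List.formPerm_apply_getLast e [G.bar f, G.bar e, f]

theorem edgeRotation_of_notMem {x : E} (hx : x ∉ G.edgeCycle e f) :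
    G.edgeRotation e f x = x := by
  classical
  exact List.formPerm_apply_of_notMem hx

theorem bar_edgeRotation (hne : f ≠ e) (hne' : f ≠ G.bar e) (x : E) :
    G.bar (G.edgeRotation e f x) = G.edgeRotation e f (G.bar x) := by
  by_cases hx : x ∈ G.edgeCycle e f
  · rcases G.mem_edgeCycle_iff.1 hx with rfl | rfl | rfl | rfl <;>
      simp only [G.bar_bar, G.edgeRotation_left hne hne', G.edgeRotation_bar_right hne hne',
        G.edgeRotation_bar_left hne hne', G.edgeRotation_right]
  · rw [G.edgeRotation_of_notMem hx, G.edgeRotation_of_notMem (mt G.bar_mem_edgeCycle_iff.1 hx)]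

theorem update_edgeRotation [DecidableEq E] {α : Type*} {d : E → α} (hd : d f = d e)
    (hne : f ≠ e) (hne' : f ≠ G.bar e) (x : E) :
    Function.update d f (d (G.bar e)) (G.edgeRotation e f x) =
      Function.update (Function.update d e (d (G.bar f))) (G.bar f) (d (G.bar e)) x := by
  have := G.bar_ne
  have := G.bar_bar
  by_cases hx : x ∈ G.edgeCycle e f
  · rcases G.mem_edgeCycle_iff.1 hx with rfl | rfl | rfl | rfl
    · rw [G.edgeRotation_left hne hne']
      grind [Function.update_apply]
    · rw [G.edgeRotation_bar_right hne hne']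
      grind [Function.update_apply]
    · rw [G.edgeRotation_bar_left hne hne']
      grind [Function.update_apply]
    · rw [G.edgeRotation_right]
      grind [Function.update_apply]
  · rw [G.edgeRotation_of_notMem hx]
    grind [Function.update_apply, mem_edgeCycle_iff]

theorem isom_reattach_reattach (ho : G.o f = G.o e) (hlab : G.lab f = G.lab e)
    (hne : f ≠ e) (hne' : f ≠ G.bar e) :
    Isom ((G.reattach e (G.bar f)).reattach (G.bar f) (G.bar e)) (G.reattach f (G.bar e)) := by
  classical
  refine ⟨id, G.edgeRotation e f, Function.bijective_id, (G.edgeRotation e f).bijective,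
    fun x ↦ ?_, G.bar_edgeRotation hne hne', fun x ↦ ?_⟩
  · simp only [reattach_o, Function.update_of_ne (G.bar_ne e), id]
    exact G.update_edgeRotation ho hne hne' x
  · simp only [reattach_lab, Function.update_of_ne (G.bar_ne e)]
    exact G.update_edgeRotation hlab hne hne' x

end LGraph

theorem stmt11_general {V E : Type} (G : LGraph V E) (hpos : G.Positive) (e f : E)
    (h1 : G.CanSlide e f) (h2 : (G.slide e f).CanSlide (G.bar f) e) :
    G.lab e = G.lab f ∧
      LGraph.Isom ((G.slide e f).slide (G.bar f) e) (G.slide f e) := by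
  have hlab : G.lab e = G.lab f :=
    G.lab_eq_of_canSlide_of_canSlide_bar (hpos e).le (hpos f) (hpos (G.bar f)).ne' h1 h2
  obtain ⟨hne, hne', ho, -⟩ := h1
  rw [G.slide_slide_bar_eq_reattach_reattach hlab (hpos f).ne' (hpos (G.bar f)).ne' hne',
    G.slide_eq_reattach hlab.symm (hpos e).ne']
  exact ⟨hlab, G.isom_reattach_reattach ho hlab.symm hne hne'⟩

/-- (Lemma 4.3(i)) In a reduced non-ascending positively-labeled graph,
for mobile edges `e, f` with `f ∉ {e, ē}`: if `e` slides over `f` (to a reduced graph `Γ'`)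
and then, in `Γ'`, `f̄` slides over `e` yielding `Γ''`, then `λ(e) = λ(f)` and `Γ''` is
isomorphic to the graph obtained from `Γ` by the single slide of `f` over `e`. -/
theorem stmt11 {V E : Type} [Finite V] [Finite E] (G : LGraph V E)
    (hpos : G.Positive) (hred : G.Reduced) (hna : G.NonAscending)
    (e f : E) (hme : G.Mobile e) (hmf : G.Mobile f)
    (hfe : f ≠ e) (hfebar : f ≠ G.bar e)
    (h1 : G.CanSlide e f) (hred' : (G.slide e f).Reduced)
    (h2 : (G.slide e f).CanSlide (G.bar f) e) :
    G.lab e = G.lab f ∧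
      LGraph.Isom ((G.slide e f).slide (G.bar f) e) (G.slide f e) :=
  stmt11_general G hpos e f h1 h2
end

section
/- Let Γ be a reduced, non-ascending labeled graph with all labels positive, let e, f be mobile edges of Γ with f ∉ {e, ē}, and let B be an edge path none of whose edges lies in {e, ē, f, f̄}. Suppose that in Γ the edge e can slide over f (a single slide) and that afterwards f can slide over B (every slide valid, every intermediate graph reduced). Then, starting again from Γ, f can slide over B and afterwards e can slide over the concatenated path B·f, and the two composite slide sequences produce the same labeled graph. -/
/-!
Write `λ(e) = k λ(f)`. Sliding over an edge `x` multiplies a label by `λ(x̄)/λ(x)`, so when `e` and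
`f` are both slid over `B`, starting from the same vertex, their origins keep agreeing and the label
of `e` remains `k` times that of `f`. Hence every slide of `f` over `B` is matched by one of `e`,
and `e` can slide over `f` at the end of `B` as well as at its beginning. In either position this
last slide moves `e` to `t(f)` and gives it the label `k λ(f̄)`, so the resulting graphs coincide.
-/

attribute [ext] LGraph

namespace LGraph

variable {V E : Type} {G H K : LGraph V E} {e f x y : E} {l : List E} {s : Set E} {k : ℤ}

theorem bar_involutive (G : LGraph V E) : Function.Involutive G.bar := G.bar_bar

theorem notMem_pair_and_bar_notMem_pair (he : x ≠ e ∧ x ≠ G.bar e) (hf : x ≠ f ∧ x ≠ G.bar f) :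
    x ∉ ({e, f} : Set E) ∧ G.bar x ∉ ({e, f} : Set E) := by
  simp only [Set.mem_insert_iff, Set.mem_singleton_iff, G.bar_involutive.eq_iff]
  tauto

theorem o_slide_self : (G.slide e x).o e = G.t x := if_pos rfl

theorem lab_slide_self : (G.slide e x).lab e = G.lab e * G.lab (G.bar x) / G.lab x := if_pos rfl

theorem o_slide_of_ne (h : f ≠ e) : (G.slide e x).o f = G.o f := if_neg h

theorem lab_slide_of_ne (h : f ≠ e) : (G.slide e x).lab f = G.lab f := if_neg h

theorem lab_slide_ne_zero (hG : ∀ y, G.lab y ≠ 0) (h : G.CanSlide e x) (y : E) :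
    (G.slide e x).lab y ≠ 0 := by
  obtain ⟨-, -, -, hdvd⟩ := h
  rcases eq_or_ne y e with rfl | hy
  · rw [lab_slide_self]
    exact mt (Int.eq_zero_of_ediv_eq_zero (hdvd.mul_right _)) (mul_ne_zero (hG y) (hG _))
  · rw [lab_slide_of_ne hy]
    exact hG y

theorem lab_slidePath_ne_zero (hG : ∀ y, G.lab y ≠ 0) (h : G.CanSlidePath e l) (y : E) :
    (G.slidePath e l).lab y ≠ 0 := by
  induction l generalizing G with
  | nil => exact hG y
  | cons x l ih => exact ih (lab_slide_ne_zero hG h.1) h.2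

theorem slidePath_append (G : LGraph V E) (e : E) (l l' : List E) :
    G.slidePath e (l ++ l') = (G.slidePath e l).slidePath e l' := by
  induction l generalizing G with
  | nil => rfl
  | cons _ _ ih => exact ih _

theorem canSlidePath_append {l' : List E} :
    G.CanSlidePath e (l ++ l') ↔ G.CanSlidePath e l ∧ (G.slidePath e l).CanSlidePath e l' := by
  induction l generalizing G with
  | nil => simp [CanSlidePath, slidePath]
  | cons x l ih => exact (and_congr_right fun _ ↦ ih).trans and_assoc.symm

theorem CanSlidePath.ne_and_ne_bar (h : G.CanSlidePath e l) :
    ∀ x ∈ l, x ≠ e ∧ x ≠ G.bar e := by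
  induction l generalizing G with
  | nil => exact List.forall_mem_nil _
  | cons x l ih => exact List.forall_mem_cons.2 ⟨⟨h.1.1, h.1.2.1⟩, ih (G := G.slide e x) h.2⟩

theorem GoodSlidePath.canSlidePath (h : G.GoodSlidePath e l) : G.CanSlidePath e l := by
  induction l generalizing G with
  | nil => trivial
  | cons x l ih => exact ⟨h.1, ih h.2.2⟩

/-- Two labeled graphs on the same vertices and edges, with the same edge reversal, agree off `s`:
edges outside `s` have the same origin and label in both. Slides of edges in `s` take place within
such a class of graphs. -/
structure EqOff (s : Set E) (G H : LGraph V E) : Prop where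
  bar_eq : G.bar = H.bar
  o_eqOn : Set.EqOn G.o H.o sᶜ
  lab_eqOn : Set.EqOn G.lab H.lab sᶜ

namespace EqOff

theorem refl (s : Set E) (G : LGraph V E) : EqOff s G G :=
  ⟨rfl, Set.eqOn_refl _ _, Set.eqOn_refl _ _⟩

theorem symm (h : EqOff s G H) : EqOff s H G :=
  ⟨h.bar_eq.symm, h.o_eqOn.symm, h.lab_eqOn.symm⟩

theorem trans (h : EqOff s G H) (h' : EqOff s H K) : EqOff s G K :=
  ⟨h.bar_eq.trans h'.bar_eq, h.o_eqOn.trans h'.o_eqOn, h.lab_eqOn.trans h'.lab_eqOn⟩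

theorem t_eq (h : EqOff s G H) (hx : G.bar x ∉ s) : G.t x = H.t x := by
  rw [t, t, ← h.bar_eq]
  exact h.o_eqOn hx

theorem lab_bar_eq (h : EqOff s G H) (hx : G.bar x ∉ s) :
    G.lab (G.bar x) = H.lab (H.bar x) := by
  rw [← h.bar_eq]
  exact h.lab_eqOn hx

theorem slide (h : EqOff s G H) (he : e ∈ s) (x : E) : EqOff s (G.slide e x) H where
  bar_eq := h.bar_eq
  o_eqOn _ hy := (o_slide_of_ne (ne_of_mem_of_not_mem he hy).symm).trans (h.o_eqOn hy)
  lab_eqOn _ hy := (lab_slide_of_ne (ne_of_mem_of_not_mem he hy).symm).trans (h.lab_eqOn hy)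

theorem slidePath (h : EqOff s G H) (he : e ∈ s) (l : List E) :
    EqOff s (G.slidePath e l) H := by
  induction l generalizing G with
  | nil => exact h
  | cons x _ ih => exact ih (h.slide he x)

end EqOff

theorem eqOff_slidePath (G : LGraph V E) (e : E) (l : List E) :
    EqOff {e} (G.slidePath e l) G :=
  (EqOff.refl _ G).slidePath (Set.mem_singleton e) l

theorem o_slidePath_of_ne (h : f ≠ e) : (G.slidePath e l).o f = G.o f :=
  (eqOff_slidePath G e l).o_eqOn h

theorem lab_slidePath_of_ne (h : f ≠ e) : (G.slidePath e l).lab f = G.lab f :=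
  (eqOff_slidePath G e l).lab_eqOn h

/-- The edge `e` of `G` is `k` times the edge `f` of `H`: both have the same origin, and the label
of `e` is `k` times that of `f`. Then `e` can follow `f` along any path. -/
structure IsMultiple (k : ℤ) (G : LGraph V E) (e : E) (H : LGraph V E) (f : E) : Prop where
  o_eq : G.o e = H.o f
  lab_eq : G.lab e = k * H.lab f

theorem canSlide_iff_exists_isMultiple :
    G.CanSlide e f ↔ (f ≠ e ∧ f ≠ G.bar e) ∧ ∃ k, IsMultiple k G e G f := by
  constructor
  · rintro ⟨hfe, hfe', ho, k, hk⟩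
    exact ⟨⟨hfe, hfe'⟩, k, ho.symm, hk.trans (mul_comm _ _)⟩
  · rintro ⟨⟨hfe, hfe'⟩, k, ho, hk⟩
    exact ⟨hfe, hfe', ho.symm, Dvd.intro_left k hk.symm⟩

namespace IsMultiple

theorem canSlide (hm : IsMultiple k G e H f) (hGH : EqOff s G H) (he : e ∈ s) (hx : x ∉ s)
    (hx' : G.bar x ∉ s) (h : H.CanSlide f x) : G.CanSlide e x := by
  obtain ⟨-, -, ho, hdvd⟩ := h
  refine ⟨(ne_of_mem_of_not_mem he hx).symm, ?_, ?_, ?_⟩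
  · rintro rfl
    exact hx' ((G.bar_bar e).symm ▸ he)
  · rw [hGH.o_eqOn hx, ho, hm.o_eq]
  · rw [hGH.lab_eqOn hx, hm.lab_eq]
    exact hdvd.mul_left k

theorem slide (hm : IsMultiple k G e H f) (hGH : EqOff s G H) (hx : x ∉ s) (hx' : G.bar x ∉ s)
    (h : H.CanSlide f x) : IsMultiple k (G.slide e x) e (H.slide f x) f where
  o_eq := by rw [o_slide_self, o_slide_self, hGH.t_eq hx']
  lab_eq := by
    rw [lab_slide_self, lab_slide_self, hm.lab_eq, hGH.lab_bar_eq hx', hGH.lab_eqOn hx, mul_assoc,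
      Int.mul_ediv_assoc _ (h.2.2.2.mul_right _)]

theorem canSlidePath_and_isMultiple (hm : IsMultiple k G e H f) (hGH : EqOff s G H) (he : e ∈ s)
    (hf : f ∈ s) (hl : ∀ x ∈ l, x ∉ s ∧ G.bar x ∉ s) (h : H.CanSlidePath f l) :
    G.CanSlidePath e l ∧ IsMultiple k (G.slidePath e l) e (H.slidePath f l) f := by
  induction l generalizing G H with
  | nil => exact ⟨trivial, hm⟩
  | cons x l ih =>
    obtain ⟨⟨hx, hx'⟩, hl⟩ := List.forall_mem_cons.1 hl
    obtain ⟨hfx, hfl⟩ := h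
    have hGH' : EqOff s (G.slide e x) (H.slide f x) := ((hGH.slide he x).symm.slide hf x).symm
    obtain ⟨hel, hm'⟩ := ih (hm.slide hGH hx hx' hfx) hGH' hl hfl
    exact ⟨⟨hm.canSlide hGH he hx hx' hfx, hel⟩, hm'⟩

theorem lab_slide_self (hm : IsMultiple k G e G f) (hf : G.lab f ≠ 0) :
    (G.slide e f).lab e = k * G.lab (G.bar f) := by
  rw [LGraph.lab_slide_self, hm.lab_eq, mul_right_comm, Int.mul_ediv_cancel _ hf]

theorem slide_slide (hG : IsMultiple k G e G f) (hH : IsMultiple k H e H f) (hGH : EqOff s G H)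
    (hbar : G.bar f ∉ s) (hGf : G.lab f ≠ 0) (hHf : H.lab f ≠ 0) :
    IsMultiple 1 (G.slide e f) e (H.slide e f) e where
  o_eq := by rw [o_slide_self, o_slide_self, hGH.t_eq hbar]
  lab_eq := by rw [hG.lab_slide_self hGf, hH.lab_slide_self hHf, hGH.lab_bar_eq hbar, one_mul]

end IsMultiple

theorem EqOff.eq (h : EqOff s G H) (hs : ∀ y ∈ s, IsMultiple 1 G y H y) : G = H := by
  ext y
  · by_cases hy : y ∈ s
    exacts [(hs y hy).o_eq, h.o_eqOn hy]
  · rw [h.bar_eq]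
  · by_cases hy : y ∈ s
    exacts [(hs y hy).lab_eq.trans (one_mul _), h.lab_eqOn hy]

theorem CanSlidePath.of_slide_and_isMultiple (hfe : f ≠ e) (hl : ∀ x ∈ l, x ≠ e ∧ x ≠ G.bar e)
    (h : (G.slide e y).CanSlidePath f l) :
    G.CanSlidePath f l ∧ IsMultiple 1 (G.slidePath f l) f ((G.slide e y).slidePath f l) f := by
  have hm : IsMultiple 1 G f (G.slide e y) f :=
    ⟨(o_slide_of_ne hfe).symm, by rw [lab_slide_of_ne hfe, one_mul]⟩
  have hG : EqOff {e, f} G (G.slide e y) := ((EqOff.refl _ G).slide (by simp) y).symm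
  exact hm.canSlidePath_and_isMultiple hG (by simp) (by simp)
    (fun x hx ↦ notMem_pair_and_bar_notMem_pair (hl x hx) (h.ne_and_ne_bar x hx)) h

theorem eqOff_slidePath_slidePath (G : LGraph V E) (e f : E) (l : List E) :
    EqOff {e, f} ((G.slidePath f l).slidePath e l) G :=
  ((EqOff.refl _ G).slidePath (by simp) l).slidePath (by simp) l

theorem IsMultiple.canSlidePath_and_isMultiple_self (hm : IsMultiple k G e G f) (hfe : f ≠ e)
    (hl : ∀ x ∈ l, x ≠ e ∧ x ≠ G.bar e) (h : G.CanSlidePath f l) :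
    (G.slidePath f l).CanSlidePath e l ∧
      IsMultiple k ((G.slidePath f l).slidePath e l) e ((G.slidePath f l).slidePath e l) f := by
  have hm' : IsMultiple k (G.slidePath f l) e G f :=
    ⟨(o_slidePath_of_ne hfe.symm).trans hm.o_eq, (lab_slidePath_of_ne hfe.symm).trans hm.lab_eq⟩
  have hG : EqOff {e, f} (G.slidePath f l) G := (EqOff.refl _ G).slidePath (by simp) l
  obtain ⟨hel, ho, hlab⟩ := hm'.canSlidePath_and_isMultiple hG (by simp) (by simp)
    (fun x hx ↦ hG.bar_eq ▸ notMem_pair_and_bar_notMem_pair (hl x hx) (h.ne_and_ne_bar x hx)) h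
  exact ⟨hel, ho.trans (o_slidePath_of_ne hfe).symm,
    hlab.trans (congrArg (k * ·) (lab_slidePath_of_ne hfe).symm)⟩

theorem CanSlide.canSlidePath_append_singleton (hef : G.CanSlide e f)
    (hl : ∀ x ∈ l, x ≠ e ∧ x ≠ G.bar e) (h : G.CanSlidePath f l) :
    (G.slidePath f l).CanSlidePath e (l ++ [f]) := by
  obtain ⟨hne, k, hm⟩ := canSlide_iff_exists_isMultiple.1 hef
  obtain ⟨hel, hm'⟩ := hm.canSlidePath_and_isMultiple_self hne.1 hl h
  rw [← (eqOff_slidePath_slidePath G e f l).bar_eq] at hne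
  exact canSlidePath_append.2 ⟨hel, canSlide_iff_exists_isMultiple.2 ⟨hne, k, hm'⟩, trivial⟩

theorem CanSlide.slide_slidePath_eq (hG : ∀ x, G.lab x ≠ 0) (hef : G.CanSlide e f)
    (hl : ∀ x ∈ l, x ≠ e ∧ x ≠ G.bar e) (h : (G.slide e f).CanSlidePath f l) :
    (G.slide e f).slidePath f l = (G.slidePath f l).slidePath e (l ++ [f]) := by
  obtain ⟨⟨hfe, hfe'⟩, k, hm⟩ := canSlide_iff_exists_isMultiple.1 hef
  obtain ⟨hfl, hff⟩ := h.of_slide_and_isMultiple hfe hl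
  obtain ⟨-, hm'⟩ := hm.canSlidePath_and_isMultiple_self hfe hl hfl
  rw [slidePath_append]
  set K := (G.slidePath f l).slidePath e l
  have hKG : EqOff {e, f} K G := eqOff_slidePath_slidePath G e f l
  have hG' : EqOff {e, f} ((G.slide e f).slidePath f l) G :=
    ((EqOff.refl _ G).slide (by simp) f).slidePath (by simp) l
  have hbar : K.bar f ∉ ({e, f} : Set E) := by
    simp [hKG.bar_eq, G.bar_involutive.eq_iff, hfe', (G.bar_ne f).symm]
  have hKf : K.lab f ≠ 0 := (lab_slidePath_of_ne hfe).trans_ne (lab_slidePath_ne_zero hG hfl f)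
  have hee : IsMultiple 1 (K.slide e f) e (G.slide e f) e := hm'.slide_slide hm hKG hbar hKf (hG f)
  have hKe : EqOff {e, f} (K.slide e f) ((G.slide e f).slidePath f l) :=
    (hKG.slide (by simp) f).trans hG'.symm
  refine (hKe.eq ?_).symm
  rintro _ (rfl | rfl)
  · exact ⟨hee.o_eq.trans (o_slidePath_of_ne hfe.symm).symm,
      hee.lab_eq.trans (congrArg (1 * ·) (lab_slidePath_of_ne hfe.symm).symm)⟩
  · exact ⟨(o_slide_of_ne hfe).trans <| (o_slidePath_of_ne hfe).trans hff.o_eq,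
      (lab_slide_of_ne hfe).trans <| (lab_slidePath_of_ne hfe).trans hff.lab_eq⟩

end LGraph

theorem stmt14_general {V E : Type} (G : LGraph V E) (hlab : ∀ x, G.lab x ≠ 0) (e f : E)
    (B : List E) (hB : ∀ x ∈ B, x ≠ e ∧ x ≠ G.bar e) (h1 : G.CanSlide e f)
    (h2 : (G.slide e f).CanSlidePath f B) :
    G.CanSlidePath f B ∧
      (G.slidePath f B).CanSlidePath e (B ++ [f]) ∧
      (G.slide e f).slidePath f B = (G.slidePath f B).slidePath e (B ++ [f]) := by
  have hfB := (h2.of_slide_and_isMultiple h1.1 hB).1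
  exact ⟨hfB, h1.canSlidePath_append_singleton hB hfB, h1.slide_slidePath_eq hlab hB h2⟩

/-- (Lemma 4.3(b)) In a reduced non-ascending positively-labeled graph,
for mobile edges `e, f` with `f ∉ {e, ē}` and a path `B` avoiding `{e, ē, f, f̄}`:
if `e` can slide over `f` and afterwards `f` over `B` (all slides valid, all intermediate
graphs reduced), then `f` can slide over `B` and afterwards `e` over `B·f`, with the
same resulting labeled graph. -/
theorem stmt14 {V E : Type} [Finite V] [Finite E] (G : LGraph V E)
    (hpos : G.Positive) (hred : G.Reduced) (hna : G.NonAscending)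
    (e f : E) (hme : G.Mobile e) (hmf : G.Mobile f)
    (hfe : f ≠ e) (hfebar : f ≠ G.bar e)
    (B : List E)
    (hB : ∀ x ∈ B, x ≠ e ∧ x ≠ G.bar e ∧ x ≠ f ∧ x ≠ G.bar f)
    (h1 : G.CanSlide e f) (hred1 : (G.slide e f).Reduced)
    (h2 : (G.slide e f).GoodSlidePath f B) :
    G.CanSlidePath f B ∧
      (G.slidePath f B).CanSlidePath e (B ++ [f]) ∧
      (G.slide e f).slidePath f B = (G.slidePath f B).slidePath e (B ++ [f]) := by
  exact stmt14_general G (fun x ↦ (hpos x).ne') e f B (fun x hx ↦ ⟨(hB x hx).1, (hB x hx).2.1⟩) h1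
    h2.canSlidePath
end
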